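/- The extended German homophonic quotient group G' (on the 30-letter alphabet including ä, ö, ü, ß) is the trivial group; that is, every element of G' equals the identity. -/

import Mathlib

/-- The 30-letter extended German alphabet: the 26 Latin letters together with
ä (`ae'`), ö (`oe'`), ü (`ue'`) and ß (`sz`). -/
inductive GermanLetter'
  | a | b | c | d | e | f | g | h | i | j | k | l | m
  | n | o | p | q | r | s | t | u | v | w | x | y | z
  | ae' -- ä
  | oe' -- ö
  | ue' -- ü
  | sz  -- ß
  deriving DecidableEq

open GermanLetter'

/-- A word, read as the ordered product of its letters in the free group. -/
def germanWord' (l : List GermanLetter') : FreeGroup GermanLetter' :=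
  (l.map FreeGroup.of).prod

/-- The 31 relators A * B⁻¹ coming from the extended German homophone pairs (A, B). -/
def germanRels' : Set (FreeGroup GermanLetter') :=
  { germanWord' [w,a,a,g,e] * (germanWord' [w,a,g,e])⁻¹,
    germanWord' [w,a,h,l] * (germanWord' [w,a,l])⁻¹,
    germanWord' [m,e,e,r] * (germanWord' [m,e,h,r])⁻¹,
    germanWord' [b,o,o,t] * (germanWord' [b,o,t])⁻¹,
    germanWord' [b,u,g] * (germanWord' [b,u,k])⁻¹,
    germanWord' [a,l,b] * (germanWord' [a,l,p])⁻¹,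
    germanWord' [m,a,n,n] * (germanWord' [m,a,n])⁻¹,
    germanWord' [v,i,e,l] * (germanWord' [f,i,e,l])⁻¹,
    germanWord' [w,a,g,e] * (germanWord' [v,a,g,e])⁻¹,
    germanWord' [g,e,w,a,l,l,t] * (germanWord' [g,e,w,a,l,t])⁻¹,
    germanWord' [s,t,a,r,r,t] * (germanWord' [s,t,a,r,t])⁻¹,
    germanWord' [s,c,h,a,f,f,t] * (germanWord' [s,c,h,a,f,t])⁻¹,
    germanWord' [k,l,a,p,p,s,t] * (germanWord' [k,l,a,p,s,t])⁻¹,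
    germanWord' [f,a,s,s,t] * (germanWord' [f,a,s,t])⁻¹,
    germanWord' [z,i,t,t,e,r,n] * (germanWord' [z,i,t,h,e,r,n])⁻¹,
    germanWord' [s,t,a,d,t] * (germanWord' [s,t,a,t,t])⁻¹,
    germanWord' [h,e,m,m,t] * (germanWord' [h,e,m,d])⁻¹,
    germanWord' [p,a,c,k,t] * (germanWord' [p,a,k,t])⁻¹,
    germanWord' [k,i,t,z] * (germanWord' [k,i,t,t,s])⁻¹,
    germanWord' [l,a,x] * (germanWord' [l,a,c,h,s])⁻¹,
    germanWord' [k,l,i,p,p] * (germanWord' [c,l,i,p])⁻¹,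
    germanWord' [t,s,c,h,a,u] * (germanWord' [c,i,a,o])⁻¹,
    germanWord' [r,o,i,e,n] * (germanWord' [r,e,u,e,n])⁻¹,
    germanWord' [b,e,a,t,e,n] * (germanWord' [b,i,e,t,e,n])⁻¹,
    germanWord' [t,o,y] * (germanWord' [t,o,i])⁻¹,
    germanWord' [j,ae',c,k,c,h,e,n] * (germanWord' [y,ae',k,c,h,e,n])⁻¹, -- jäckchen / yäkchen
    germanWord' [c,l,i,q,u,e] * (germanWord' [k,l,i,c,k,e])⁻¹,
    germanWord' [h,ae',u,t,i,g] * (germanWord' [h,e,u,t,i,g])⁻¹,        -- häutig / heutig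
    germanWord' [f,r,i,s,oe',r] * (germanWord' [f,r,i,s,e,u,r])⁻¹,      -- frisör / friseur
    germanWord' [m,ue',h] * (germanWord' [m,y])⁻¹,                       -- müh / my
    germanWord' [a,sz] * (germanWord' [a,a,s])⁻¹ }                       -- aß / aas

/-- The extended German homophonic quotient group. -/
abbrev GermanGroup' := PresentedGroup germanRels'

/-- Each defining pair gives an equality of products in the quotient. -/
lemma german_rel_eq {A B : List GermanLetter'}
    (h : germanWord' A * (germanWord' B)⁻¹ ∈ germanRels') :
    (A.map (PresentedGroup.of (rels := germanRels'))).prod =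
      (B.map (PresentedGroup.of (rels := germanRels'))).prod := by
  have key : ∀ L : List GermanLetter',
      PresentedGroup.mk germanRels' (germanWord' L) =
        (L.map (PresentedGroup.of (rels := germanRels'))).prod := by
    intro L
    rw [germanWord', map_list_prod, List.map_map]
    rfl
  have h1 := PresentedGroup.one_of_mem h
  rw [map_mul, map_inv, mul_inv_eq_one, key, key] at h1
  exact h1

/-- The extended German homophonic quotient group (including ä, ö, ü, ß) is trivial. -/
theorem german_extended_group_trivial : ∀ x : GermanGroup', x = 1 := by
  have h_a : PresentedGroup.of (rels := germanRels') a = 1 := by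
    simpa [] using german_rel_eq (A := [w,a,a,g,e]) (B := [w,a,g,e]) (by exact Or.inl rfl)
  have h_h : PresentedGroup.of (rels := germanRels') h = 1 := by
    simpa [h_a] using german_rel_eq (A := [w,a,h,l]) (B := [w,a,l]) (by (iterate 1 apply Set.mem_insert_of_mem); exact Or.inl rfl)
  have h_e : PresentedGroup.of (rels := germanRels') e = 1 := by
    simpa [h_a, h_h] using german_rel_eq (A := [m,e,e,r]) (B := [m,e,h,r]) (by (iterate 2 apply Set.mem_insert_of_mem); exact Or.inl rfl)
  have h_o : PresentedGroup.of (rels := germanRels') o = 1 := by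
    simpa [h_a, h_h, h_e] using german_rel_eq (A := [b,o,o,t]) (B := [b,o,t]) (by (iterate 3 apply Set.mem_insert_of_mem); exact Or.inl rfl)
  have h_g : PresentedGroup.of (rels := germanRels') g = PresentedGroup.of k := by
    simpa [h_a, h_h, h_e, h_o] using german_rel_eq (A := [b,u,g]) (B := [b,u,k]) (by (iterate 4 apply Set.mem_insert_of_mem); exact Or.inl rfl)
  have h_b : PresentedGroup.of (rels := germanRels') b = PresentedGroup.of p := by
    simpa [h_a, h_h, h_e, h_o, h_g] using german_rel_eq (A := [a,l,b]) (B := [a,l,p]) (by (iterate 5 apply Set.mem_insert_of_mem); exact Or.inl rfl)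
  have h_n : PresentedGroup.of (rels := germanRels') n = 1 := by
    simpa [h_a, h_h, h_e, h_o, h_g, h_b] using german_rel_eq (A := [m,a,n,n]) (B := [m,a,n]) (by (iterate 6 apply Set.mem_insert_of_mem); exact Or.inl rfl)
  have h_v : PresentedGroup.of (rels := germanRels') v = PresentedGroup.of f := by
    simpa [h_a, h_h, h_e, h_o, h_g, h_b, h_n] using german_rel_eq (A := [v,i,e,l]) (B := [f,i,e,l]) (by (iterate 7 apply Set.mem_insert_of_mem); exact Or.inl rfl)
  have h_w : PresentedGroup.of (rels := germanRels') w = PresentedGroup.of v := by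
    simpa [h_a, h_h, h_e, h_o, h_g, h_b, h_n, h_v] using german_rel_eq (A := [w,a,g,e]) (B := [v,a,g,e]) (by (iterate 8 apply Set.mem_insert_of_mem); exact Or.inl rfl)
  have h_l : PresentedGroup.of (rels := germanRels') l = 1 := by
    simpa [h_a, h_h, h_e, h_o, h_g, h_b, h_n, h_v, h_w] using german_rel_eq (A := [g,e,w,a,l,l,t]) (B := [g,e,w,a,l,t]) (by (iterate 9 apply Set.mem_insert_of_mem); exact Or.inl rfl)
  have h_r : PresentedGroup.of (rels := germanRels') r = 1 := by
    simpa [h_a, h_h, h_e, h_o, h_g, h_b, h_n, h_v, h_w, h_l] using german_rel_eq (A := [s,t,a,r,r,t]) (B := [s,t,a,r,t]) (by (iterate 10 apply Set.mem_insert_of_mem); exact Or.inl rfl)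
  have h_f : PresentedGroup.of (rels := germanRels') f = 1 := by
    simpa [h_a, h_h, h_e, h_o, h_g, h_b, h_n, h_v, h_w, h_l, h_r] using german_rel_eq (A := [s,c,h,a,f,f,t]) (B := [s,c,h,a,f,t]) (by (iterate 11 apply Set.mem_insert_of_mem); exact Or.inl rfl)
  have h_p : PresentedGroup.of (rels := germanRels') p = 1 := by
    simpa [h_a, h_h, h_e, h_o, h_g, h_b, h_n, h_v, h_w, h_l, h_r, h_f] using german_rel_eq (A := [k,l,a,p,p,s,t]) (B := [k,l,a,p,s,t]) (by (iterate 12 apply Set.mem_insert_of_mem); exact Or.inl rfl)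
  have h_s : PresentedGroup.of (rels := germanRels') s = 1 := by
    simpa [h_a, h_h, h_e, h_o, h_g, h_b, h_n, h_v, h_w, h_l, h_r, h_f, h_p] using german_rel_eq (A := [f,a,s,s,t]) (B := [f,a,s,t]) (by (iterate 13 apply Set.mem_insert_of_mem); exact Or.inl rfl)
  have h_t : PresentedGroup.of (rels := germanRels') t = 1 := by
    simpa [h_a, h_h, h_e, h_o, h_g, h_b, h_n, h_v, h_w, h_l, h_r, h_f, h_p, h_s] using german_rel_eq (A := [z,i,t,t,e,r,n]) (B := [z,i,t,h,e,r,n]) (by (iterate 14 apply Set.mem_insert_of_mem); exact Or.inl rfl)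
  have h_d : PresentedGroup.of (rels := germanRels') d = 1 := by
    simpa [h_a, h_h, h_e, h_o, h_g, h_b, h_n, h_v, h_w, h_l, h_r, h_f, h_p, h_s, h_t] using german_rel_eq (A := [s,t,a,d,t]) (B := [s,t,a,t,t]) (by (iterate 15 apply Set.mem_insert_of_mem); exact Or.inl rfl)
  have h_m : PresentedGroup.of (rels := germanRels') m = 1 := by
    simpa [h_a, h_h, h_e, h_o, h_g, h_b, h_n, h_v, h_w, h_l, h_r, h_f, h_p, h_s, h_t, h_d] using german_rel_eq (A := [h,e,m,m,t]) (B := [h,e,m,d]) (by (iterate 16 apply Set.mem_insert_of_mem); exact Or.inl rfl)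
  have h_c : PresentedGroup.of (rels := germanRels') c = 1 := by
    simpa [h_a, h_h, h_e, h_o, h_g, h_b, h_n, h_v, h_w, h_l, h_r, h_f, h_p, h_s, h_t, h_d, h_m] using german_rel_eq (A := [p,a,c,k,t]) (B := [p,a,k,t]) (by (iterate 17 apply Set.mem_insert_of_mem); exact Or.inl rfl)
  have h_z : PresentedGroup.of (rels := germanRels') z = 1 := by
    simpa [h_a, h_h, h_e, h_o, h_g, h_b, h_n, h_v, h_w, h_l, h_r, h_f, h_p, h_s, h_t, h_d, h_m, h_c] using german_rel_eq (A := [k,i,t,z]) (B := [k,i,t,t,s]) (by (iterate 18 apply Set.mem_insert_of_mem); exact Or.inl rfl)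
  have h_x : PresentedGroup.of (rels := germanRels') x = 1 := by
    simpa [h_a, h_h, h_e, h_o, h_g, h_b, h_n, h_v, h_w, h_l, h_r, h_f, h_p, h_s, h_t, h_d, h_m, h_c, h_z] using german_rel_eq (A := [l,a,x]) (B := [l,a,c,h,s]) (by (iterate 19 apply Set.mem_insert_of_mem); exact Or.inl rfl)
  have h_k : PresentedGroup.of (rels := germanRels') k = 1 := by
    simpa [h_a, h_h, h_e, h_o, h_g, h_b, h_n, h_v, h_w, h_l, h_r, h_f, h_p, h_s, h_t, h_d, h_m, h_c, h_z, h_x] using german_rel_eq (A := [k,l,i,p,p]) (B := [c,l,i,p]) (by (iterate 20 apply Set.mem_insert_of_mem); exact Or.inl rfl)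
  have h_u : PresentedGroup.of (rels := germanRels') u = PresentedGroup.of i := by
    simpa [h_a, h_h, h_e, h_o, h_g, h_b, h_n, h_v, h_w, h_l, h_r, h_f, h_p, h_s, h_t, h_d, h_m, h_c, h_z, h_x, h_k] using german_rel_eq (A := [t,s,c,h,a,u]) (B := [c,i,a,o]) (by (iterate 21 apply Set.mem_insert_of_mem); exact Or.inl rfl)
  have h_i : PresentedGroup.of (rels := germanRels') i = 1 := by
    simpa [h_a, h_h, h_e, h_o, h_g, h_b, h_n, h_v, h_w, h_l, h_r, h_f, h_p, h_s, h_t, h_d, h_m, h_c, h_z, h_x, h_k, h_u] using (german_rel_eq (A := [b,e,a,t,e,n]) (B := [b,i,e,t,e,n]) (by (iterate 23 apply Set.mem_insert_of_mem); exact Or.inl rfl)).symm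
  have h_y : PresentedGroup.of (rels := germanRels') y = 1 := by
    simpa [h_a, h_h, h_e, h_o, h_g, h_b, h_n, h_v, h_w, h_l, h_r, h_f, h_p, h_s, h_t, h_d, h_m, h_c, h_z, h_x, h_k, h_u, h_i] using german_rel_eq (A := [t,o,y]) (B := [t,o,i]) (by (iterate 24 apply Set.mem_insert_of_mem); exact Or.inl rfl)
  have h_ae : PresentedGroup.of (rels := germanRels') ae' = 1 := by
    simpa [h_a, h_h, h_e, h_o, h_g, h_b, h_n, h_v, h_w, h_l, h_r, h_f, h_p, h_s, h_t, h_d, h_m, h_c, h_z, h_x, h_k, h_u, h_i, h_y] using german_rel_eq (A := [h,ae',u,t,i,g]) (B := [h,e,u,t,i,g]) (by (iterate 27 apply Set.mem_insert_of_mem); exact Or.inl rfl)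
  have h_j : PresentedGroup.of (rels := germanRels') j = 1 := by
    simpa [h_a, h_h, h_e, h_o, h_g, h_b, h_n, h_v, h_w, h_l, h_r, h_f, h_p, h_s, h_t, h_d, h_m, h_c, h_z, h_x, h_k, h_u, h_i, h_y, h_ae] using german_rel_eq (A := [j,ae',c,k,c,h,e,n]) (B := [y,ae',k,c,h,e,n]) (by (iterate 25 apply Set.mem_insert_of_mem); exact Or.inl rfl)
  have h_q : PresentedGroup.of (rels := germanRels') q = 1 := by
    simpa [h_a, h_h, h_e, h_o, h_g, h_b, h_n, h_v, h_w, h_l, h_r, h_f, h_p, h_s, h_t, h_d, h_m, h_c, h_z, h_x, h_k, h_u, h_i, h_y, h_ae, h_j] using german_rel_eq (A := [c,l,i,q,u,e]) (B := [k,l,i,c,k,e]) (by (iterate 26 apply Set.mem_insert_of_mem); exact Or.inl rfl)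
  have h_oe : PresentedGroup.of (rels := germanRels') oe' = 1 := by
    simpa [h_a, h_h, h_e, h_o, h_g, h_b, h_n, h_v, h_w, h_l, h_r, h_f, h_p, h_s, h_t, h_d, h_m, h_c, h_z, h_x, h_k, h_u, h_i, h_y, h_ae, h_j, h_q] using german_rel_eq (A := [f,r,i,s,oe',r]) (B := [f,r,i,s,e,u,r]) (by (iterate 28 apply Set.mem_insert_of_mem); exact Or.inl rfl)
  have h_ue : PresentedGroup.of (rels := germanRels') ue' = 1 := by
    simpa [h_a, h_h, h_e, h_o, h_g, h_b, h_n, h_v, h_w, h_l, h_r, h_f, h_p, h_s, h_t, h_d, h_m, h_c, h_z, h_x, h_k, h_u, h_i, h_y, h_ae, h_j, h_q, h_oe] using german_rel_eq (A := [m,ue',h]) (B := [m,y]) (by (iterate 29 apply Set.mem_insert_of_mem); exact Or.inl rfl)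
  have h_sz : PresentedGroup.of (rels := germanRels') sz = 1 := by
    simpa [h_a, h_h, h_e, h_o, h_g, h_b, h_n, h_v, h_w, h_l, h_r, h_f, h_p, h_s, h_t, h_d, h_m, h_c, h_z, h_x, h_k, h_u, h_i, h_y, h_ae, h_j, h_q, h_oe, h_ue] using german_rel_eq (A := [a,sz]) (B := [a,a,s]) (by (iterate 30 apply Set.mem_insert_of_mem); exact rfl)
  have hall : ∀ lt : GermanLetter', PresentedGroup.of (rels := germanRels') lt = 1 := by
    intro lt
    cases lt <;> simp [h_a, h_h, h_e, h_o, h_g, h_b, h_n, h_v, h_w, h_l, h_r, h_f, h_p, h_s, h_t, h_d, h_m, h_c, h_z, h_x, h_k, h_u, h_i, h_y, h_ae, h_j, h_q, h_oe, h_ue, h_sz]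
  intro x
  have hx : MonoidHom.id GermanGroup' = 1 := by
    apply PresentedGroup.ext
    intro lt
    exact hall lt
  exact DFunLike.congr_fun hx x
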